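/- For every integer a: ψ'(γ^a R'_1) = −2^{3s} + 2^{2s} − 1 if a mod M ∈ T_1, and ψ'(γ^a R'_1) = 2^{2s} − 1 otherwise; ψ'(γ^a R'_2) = 2^{s−1}(2^s + 1)(−2^{2s} + 2^s − 1) if a ≡ 0 (mod M), ψ'(γ^a R'_2) = 2^{s−1}(2^{2s} − 1) if a mod M ∈ T_1, and ψ'(γ^a R'_2) = −2^{s−1} otherwise; ψ'(γ^a R'_3) = 2^{s−1}(2^s − 1)(2^{2s} + 2^s − 1) if a ≡ 0 (mod M), ψ'(γ^a R'_3) = 2^{s−1}(2^s − 1)² if a mod M ∈ T_1, and ψ'(γ^a R'_3) = 2^{s−1}(1 − 2^{s+1}) otherwise. -/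

import Mathlib

noncomputable section

open scoped BigOperators

/-- `M = 2^{2s} + 2^s + 1`. -/
abbrev Mof (s : ℕ) : ℕ := 2 ^ (2 * s) + 2 ^ s + 1

/-- The relative trace from `F` (of order `2^{3s}`) to its subfield `E` of order `2^s`:
`Tr_{F/E}(x) = x + x^{2^s} + x^{2^{2s}}`, viewed as a map `F → F`. -/
def trFE {F : Type*} [Field F] (s : ℕ) (x : F) : F :=
  x + x ^ (2 ^ s) + x ^ (2 ^ (2 * s))

/-- `ψ(x) = 1` if the absolute trace `Tr_{F/𝔽₂}(x) = 0`, and `-1` otherwise. -/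
def psi (F : Type*) [Field F] [Algebra (ZMod 2) F] (x : F) : ℤ :=
  if Algebra.trace (ZMod 2) F x = 0 then 1 else -1

/-- `ψ(cS) = ∑_{x ∈ S} ψ(c·x)`. -/
def psiSum (F : Type*) [Field F] [Algebra (ZMod 2) F] (c : F) (S : Set F) : ℤ :=
  ∑ᶠ x ∈ S, psi F (c * x)

/-- `D = {u ∈ F^× : Tr_{F/E}(u⁻¹) = 0}`. -/
def Dset (F : Type*) [Field F] (s : ℕ) : Set F :=
  {u | u ≠ 0 ∧ trFE s u⁻¹ = 0}

/-- `S_a = {u ∈ F^× : Tr_{F/E}(u^{2^s+1}) = 0 ∧ Tr_{F/E}(ω^a u) = 0}`. -/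
def Sa {F : Type*} [Field F] (s : ℕ) (ω : F) (a : ℤ) : Set F :=
  {u | u ≠ 0 ∧ trFE s (u ^ (2 ^ s + 1)) = 0 ∧ trFE s (ω ^ a * u) = 0}

/-- `T₁ ⊆ ℤ/Mℤ`: classes `a` with `|S_a| = 2^s - 1`. -/
def T1 {F : Type*} [Field F] (s : ℕ) (ω : F) : Set (ZMod (Mof s)) :=
  {x | (Sa s ω (x.val : ℤ)).ncard = 2 ^ s - 1}

/-- `T₂ ⊆ ℤ/Mℤ`: classes `a` with `|S_a| = 2(2^s - 1)`. -/
def T2 {F : Type*} [Field F] (s : ℕ) (ω : F) : Set (ZMod (Mof s)) :=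
  {x | (Sa s ω (x.val : ℤ)).ncard = 2 * (2 ^ s - 1)}

/-- `T₃ ⊆ ℤ/Mℤ`: classes `a` with `|S_a| = 0`. -/
def T3 {F : Type*} [Field F] (s : ℕ) (ω : F) : Set (ZMod (Mof s)) :=
  {x | (Sa s ω (x.val : ℤ)).ncard = 0}

/-- The cyclotomic class `C_i^{(M,K)} = {g^{i+Mt} : t ∈ ℤ}`. -/
def cyc {K : Type*} [Field K] (M : ℕ) (g : K) (i : ℤ) : Set K :=
  {x | ∃ t : ℤ, x = g ^ (i + (M : ℤ) * t)}

/-- `⋃_{i ∈ T} C_i^{(M,K)}` for a set `T ⊆ ℤ/Mℤ` of indices. -/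
def Rclass {K : Type*} [Field K] (s : ℕ) (g : K) (T : Set (ZMod (Mof s))) : Set K :=
  ⋃ i ∈ T, cyc (Mof s) g ((i.val : ℤ))

/-- The family `R_0 = {0}`, `R_k = ⋃_{i ∈ T_k} C_i^{(M,K)}`, `k = 1, 2, 3`. -/
def Rfam {F K : Type*} [Field F] [Field K] (s : ℕ) (ω : F) (g : K) : Fin 4 → Set K :=
  ![{0}, Rclass s g (T1 s ω), Rclass s g (T2 s ω), Rclass s g (T3 s ω)]

/-- Indicator `[P] = 1` if `P` holds, `0` otherwise. -/
def Ind (P : Prop) : ℤ := @ite ℤ P (Classical.propDecidable P) 1 0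

/-!
Let `q = 2 ^ s = #E` and write `ψ` for the sign of the absolute trace on both `F` and `G`. For
`u ∈ F^×`, detecting the condition `Tr_{F/E}(u N(x)) = 0` by the characters of `E` turns the sum of
`ψ(c x)` over it into sums of `ψ(l N(x) + Tr(c x))` over `G` with `l ∈ F`. For `l ≠ 0`, completing
the square evaluates the latter as `-q ^ 3 ψ(-l⁻¹ N(c))`, and the total depends only on whether
`Tr_{F/E}(u⁻¹ N(c)) = 0`.

`|S_a|` counts the nonzero vectors of the cone over the conic `Tr_{F/E}(u ^ (q + 1)) = 0` on the
plane `Tr_{F/E}(ω ^ a u) = 0`. In characteristic two all tangent lines of a conic pass through its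
nucleus, here `1`: the count is `q - 1` when the plane contains `1`, that is when
`Tr_{F/E}(ω ^ a) = 0`, and `0` or `2 (q - 1)` otherwise.

The three sums therefore satisfy three linear relations. The sum over `T₁` is the case `u = 1`; all
three add up to `-1`; and summing the first paragraph over `u` in the cone weighs the sum over each
class by `|S_a|`. For the last relation one needs the number of `u` in the cone with
`Tr_{F/E}(u⁻¹ N(c)) = 0`: inversion maps the nonzero vectors of the cone onto those of the plane
`Tr = 0`, so this counts the nonzero solutions of two linear equations, independent unless
`N(c) ∈ E`.
-/

local notation "Frob" => FiniteField.frobeniusAlgEquivOfAlgebraic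

section QuadraticExtension

variable {K L : Type*} [Field K] [Field L] [Algebra K L]

theorem sum_mul_norm_eq_sum_norm [Fintype L] {R : Type*} [AddCommMonoid R] (f : K → R) {l : K}
    (hl : l ≠ 0) : ∑ x : L, f (l * Algebra.norm K x) = ∑ x : L, f (Algebra.norm K x) := by
  obtain ⟨g, rfl⟩ := FiniteField.norm_surjective K L l
  have hg : g ≠ 0 := by simpa [Algebra.norm_eq_zero_iff] using hl
  exact Fintype.sum_equiv (Equiv.mulLeft₀ g hg) _ _ fun x => by simp

variable [Fintype K]

theorem algebraMap_norm_eq_mul_frobenius [Finite L] (h : Module.finrank K L = 2) (x : L) :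
    algebraMap K L (Algebra.norm K x) = x * Frob K L x := by
  simp [FiniteField.algebraMap_norm_eq_prod_pow, h, Finset.prod_range_succ]

theorem algebraMap_trace_eq_add_frobenius [Finite L] (h : Module.finrank K L = 2) (x : L) :
    algebraMap K L (Algebra.trace K L x) = x + Frob K L x := by
  simp [FiniteField.algebraMap_trace_eq_sum_pow, h, Finset.sum_range_succ]

theorem frobenius_iterate_finrank [Finite L] (x : L) :
    (Frob K L)^[Module.finrank K L] x = x := by
  have := Fintype.ofFinite L
  simp only [FiniteField.coe_frobeniusAlgEquivOfAlgebraic_iterate,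
    ← Module.card_eq_pow_finrank (K := K) (V := L), FiniteField.pow_card]

/-- Completing the square: `N(x + d) = N(x) + Tr(x d̄) + N(d)` with `d = c̄ / l`. -/
theorem mul_norm_add_frobenius_div [Finite L] (h : Module.finrank K L = 2) {l : K} (hl : l ≠ 0)
    (c x : L) :
    l * Algebra.norm K (x + algebraMap K L l⁻¹ * Frob K L c) =
      l * Algebra.norm K x + Algebra.trace K L (c * x) + l⁻¹ * Algebra.norm K c := by
  have hl' : algebraMap K L l ≠ 0 := by simpa
  have hc : Frob K L (Frob K L c) = c := by simpa [h] using frobenius_iterate_finrank (K := K) c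
  apply (algebraMap K L).injective
  simp only [map_mul, map_add, algebraMap_norm_eq_mul_frobenius h,
    algebraMap_trace_eq_add_frobenius h, AlgEquiv.commutes,
    hc, map_inv₀]
  field_simp
  ring

variable [Fintype L] {R : Type*} [CommRing R] [IsDomain R] [CharZero R]

theorem sum_addChar_mul_norm (h : Module.finrank K L = 2) {ψ : AddChar K R}
    (hψ : ψ ≠ 1) {l : K} (hl : l ≠ 0) :
    ∑ x : L, ψ (l * Algebra.norm K x) = -(Fintype.card K : R) := by
  classical
  rw [sum_mul_norm_eq_sum_norm ψ hl]
  set W := ∑ x : L, ψ (Algebra.norm K x) with hW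
  set Q := (Fintype.card K : R) with hQ
  have hcard : (Fintype.card L : R) = Q ^ 2 := by
    rw [Module.card_eq_pow_finrank (K := K), h, Nat.cast_pow]
  have sum_eq_card : ∑ m : K, ∑ x : L, ψ (m * Algebra.norm K x) = Q := by
    rw [Finset.sum_comm]
    simp only [AddChar.sum_mulShift _ (AddChar.IsPrimitive.of_ne_one hψ),
      Algebra.norm_eq_zero_iff, Nat.cast_ite, Nat.cast_zero, Finset.sum_ite_eq',
      Finset.mem_univ, if_true, hQ]
  have sum_eq : ∑ m : K, ∑ x : L, ψ (m * Algebra.norm K x) = Q ^ 2 + (Q - 1) * W := by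
    rw [Fintype.sum_eq_add_sum_compl 0, Finset.sum_congr rfl fun m hm =>
      sum_mul_norm_eq_sum_norm ψ (by simpa using hm)]
    simp [hcard, Finset.card_compl, Nat.cast_sub Fintype.card_pos, hQ, hW]
  have hQ1 : Q - 1 ≠ 0 := by
    rw [sub_ne_zero, hQ, Nat.cast_ne_one]
    exact Fintype.one_lt_card.ne'
  apply mul_left_cancel₀ hQ1
  linear_combination sum_eq_card - sum_eq

theorem sum_addChar_mul_norm_add_trace (h : Module.finrank K L = 2) {ψ : AddChar K R}
    (hψ : ψ ≠ 1) {l : K} (hl : l ≠ 0) (c : L) :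
    ∑ x : L, ψ (l * Algebra.norm K x + Algebra.trace K L (c * x)) =
      -(Fintype.card K * ψ (-(l⁻¹ * Algebra.norm K c))) := by
  calc ∑ x : L, ψ (l * Algebra.norm K x + Algebra.trace K L (c * x))
    _ = ∑ x : L, ψ (l * Algebra.norm K (x + algebraMap K L l⁻¹ * Frob K L c)) *
          ψ (-(l⁻¹ * Algebra.norm K c)) := by
        simp only [mul_norm_add_frobenius_div h hl, ← AddChar.map_add_eq_mul,
          add_neg_cancel_right]
    _ = (∑ x : L, ψ (l * Algebra.norm K x)) * ψ (-(l⁻¹ * Algebra.norm K c)) := by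
        rw [← Finset.sum_mul]
        congr 1
        exact Fintype.sum_equiv (Equiv.addRight _) _ _ fun _ => rfl
    _ = _ := by rw [sum_addChar_mul_norm h hψ hl, neg_mul]

end QuadraticExtension

section Tower

variable {E F G R : Type*} [Field E] [Field F] [Field G] [Algebra E F] [Algebra F G] [CommRing R]

/-- The additive character `χ ∘ Tr_{F/E}` of `F` induced by an additive character `χ` of `E`. -/
def traceChar (F : Type*) [Field F] [Algebra E F] (χ : AddChar E R) : AddChar F R :=
  χ.compAddMonoidHom (Algebra.trace E F).toAddMonoidHom

@[simp]
theorem traceChar_apply (χ : AddChar E R) (x : F) :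
    traceChar F χ x = χ (Algebra.trace E F x) := rfl

theorem traceChar_ne_one [FiniteDimensional E F] [Algebra.IsSeparable E F] {χ : AddChar E R}
    (hχ : χ ≠ 1) : traceChar F χ ≠ 1 := by
  obtain ⟨e, he⟩ := AddChar.ne_one_iff.mp hχ
  obtain ⟨x, rfl⟩ := Algebra.trace_surjective E F e
  exact AddChar.ne_one_iff.mpr ⟨x, he⟩

theorem traceChar_traceChar [Algebra E G] [IsScalarTower E F G] [FiniteDimensional E F]
    [FiniteDimensional F G] (χ : AddChar E R) :
    traceChar G (traceChar F χ) = traceChar G χ := by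
  ext x
  simp only [traceChar_apply, Algebra.trace_trace]

theorem traceChar_algebraMap_mul (χ : AddChar E R) (e : E) (x : F) :
    traceChar F χ (algebraMap E F e * x) = χ (e * Algebra.trace E F x) := by
  rw [traceChar_apply, ← Algebra.smul_def, map_smul, smul_eq_mul]

variable [Fintype F] [Fintype G] [IsDomain R] [CharZero R]

theorem sum_traceChar_mul_norm_add_trace [Finite E] [DecidableEq E]
    (h : Module.finrank F G = 2) {χ : AddChar E R} (hχ : χ ≠ 1) {u : F} (hu : u ≠ 0) {c : G}
    (hc : c ≠ 0) (e : E) :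
    ∑ x : G, traceChar F χ
        (algebraMap E F e * u * Algebra.norm F x + Algebra.trace F G (c * x)) =
      Fintype.card F * ((if e = 0 then 1 else 0) -
        χ (-e⁻¹ * Algebra.trace E F (Algebra.norm F c * u⁻¹))) := by
  classical
  have hψ := traceChar_ne_one (F := F) hχ
  rcases eq_or_ne e 0 with rfl | he
  · have := AddChar.sum_mulShift c (AddChar.IsPrimitive.of_ne_one (traceChar_ne_one (F := G) hψ))
    simpa [hc, mul_comm c] using this
  · have heu : algebraMap E F e * u ≠ 0 := mul_ne_zero (by simpa) hu
    rw [sum_addChar_mul_norm_add_trace h hψ heu, ← traceChar_algebraMap_mul, if_neg he, zero_sub,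
      mul_neg]
    congr 3
    rw [map_neg, map_inv₀, mul_inv]
    ring

/-- Detecting `Tr(u N(x)) = 0` by the characters `t ↦ χ(e t)` of `E` turns the left-hand side into
a sum of Gauss sums over `G`, one for each `e`. -/
theorem card_mul_sum_trace_norm_eq_zero [Fintype E] [DecidableEq E]
    (h : Module.finrank F G = 2) {χ : AddChar E R} (hχ : χ ≠ 1) {u : F} (hu : u ≠ 0) {c : G}
    (hc : c ≠ 0) :
    Fintype.card E * ∑ x : G with Algebra.trace E F (u * Algebra.norm F x) = 0,
        traceChar G (traceChar F χ) (c * x) =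
      (Fintype.card F : R) * (1 - if Algebra.trace E F (Algebra.norm F c * u⁻¹) = 0
        then (Fintype.card E : R) else 0) := by
  have sum_detect (t : E) : ∑ e, χ (e * t) = if t = 0 then (Fintype.card E : R) else 0 := by
    simpa using AddChar.sum_mulShift t (AddChar.IsPrimitive.of_ne_one hχ)
  calc Fintype.card E * ∑ x : G with Algebra.trace E F (u * Algebra.norm F x) = 0,
        traceChar G (traceChar F χ) (c * x)
    _ = ∑ x : G, ∑ e : E, traceChar F χ (algebraMap E F e * u * Algebra.norm F x +
          Algebra.trace F G (c * x)) := by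
        rw [Finset.sum_filter, Finset.mul_sum]
        refine Finset.sum_congr rfl fun x _ => ?_
        simp only [AddChar.map_add_eq_mul, ← Finset.sum_mul, mul_assoc,
          traceChar_algebraMap_mul, sum_detect, ite_mul, zero_mul, mul_ite, mul_zero]
        rfl
    _ = ∑ e : E, Fintype.card F * ((if e = 0 then 1 else 0) -
          χ (-e⁻¹ * Algebra.trace E F (Algebra.norm F c * u⁻¹))) := by
        rw [Finset.sum_comm]
        exact Finset.sum_congr rfl fun e _ => sum_traceChar_mul_norm_add_trace h hχ hu hc e
    _ = _ := by
        rw [← Finset.mul_sum, Finset.sum_sub_distrib, Finset.sum_ite_eq',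
          if_pos (Finset.mem_univ _), ← sum_detect]
        congr 2
        exact Fintype.sum_equiv ((Equiv.inv E).trans (Equiv.neg E)) _ _ fun e => rfl

end Tower

section QuadraticForm

variable {K V : Type*} [Field K] [AddCommGroup V] [Module K V] {Q : QuadraticForm K V}

theorem map_smul_add_smul (v w : V) (a b : K) :
    Q (a • v + b • w) = a ^ 2 * Q v + b ^ 2 * Q w + a * b * Q.polarBilin v w := by
  rw [QuadraticMap.map_add Q, QuadraticMap.map_smul, QuadraticMap.map_smul,
    QuadraticMap.polar_smul_left, QuadraticMap.polar_smul_right]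
  simp only [smul_eq_mul, QuadraticMap.polarBilin_apply_apply]
  ring

theorem exists_hyperbolic_pair (hQ : Q.polarBilin.SeparatingLeft) {z : V} (hz : z ≠ 0)
    (hQz : Q z = 0) : ∃ w, Q w = 0 ∧ Q.polarBilin z w = 1 := by
  obtain ⟨v, hv⟩ : ∃ v, Q.polarBilin z v ≠ 0 := by
    by_contra! hall
    exact hz (hQ z hall)
  set p := Q.polarBilin z v
  have hzz : Q.polarBilin z z = 0 := by simp [hQz]
  refine ⟨(-(Q v / p ^ 2)) • z + p⁻¹ • v, ?_, ?_⟩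
  · rw [map_smul_add_smul, hQz]
    change _ + _ + _ * p = 0
    field_simp
    ring
  · rw [map_add, map_smul, map_smul, hzz, smul_zero, zero_add, smul_eq_mul, inv_mul_cancel₀ hv]

theorem ncard_mul_eq_zero [Finite K] :
    {p : K × K | p.1 * p.2 = 0}.ncard = 2 * Nat.card K - 1 := by
  have hunion : {p : K × K | p.1 * p.2 = 0} = {0} ×ˢ Set.univ ∪ Set.univ ×ˢ {0} := by
    ext p
    simp
  have hinter : ({0} ×ˢ Set.univ ∩ Set.univ ×ˢ {0} : Set (K × K)) = {0} := by
    ext p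
    simp [Prod.ext_iff]
  have := Set.ncard_union_add_ncard_inter ({0} ×ˢ Set.univ) (Set.univ ×ˢ {0} : Set (K × K))
  rw [← hunion, hinter, Set.ncard_prod, Set.ncard_prod, Set.ncard_univ] at this
  simp only [Set.ncard_singleton] at this
  omega

theorem ncard_zeros_of_hyperbolic_pair [Finite K] (hV : Module.finrank K V = 2) {z w : V}
    (hz : Q z = 0) (hw : Q w = 0) (hzw : Q.polarBilin z w = 1) :
    {v | Q v = 0}.ncard = 2 * Nat.card K - 1 := by
  let φ : K × K →ₗ[K] V := (LinearMap.toSpanSingleton K V z).coprod (.toSpanSingleton K V w)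
  have hQφ (p : K × K) : Q (φ p) = p.1 * p.2 := by
    simp [φ, map_smul_add_smul, hz, hw, hzw]
  have hinj : Function.Injective φ := by
    have hzz : Q.polarBilin z z = 0 := by simp [hz]
    have hww : Q.polarBilin w w = 0 := by simp [hw]
    have hcoord (p : K × K) : p = (Q.polarBilin (φ p) w, Q.polarBilin z (φ p)) := by
      simp [φ, -QuadraticMap.polarBilin_apply_apply, hzz, hww, hzw]
    intro p p' h
    rw [hcoord p, hcoord p', h]
  have : FiniteDimensional K V := .of_finrank_pos (by simp [hV])
  have hsurj : Function.Surjective φ :=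
    (LinearMap.injective_iff_surjective_of_finrank_eq_finrank (by simp [hV])).mp hinj
  have himage : {v | Q v = 0} = φ '' {p | p.1 * p.2 = 0} := by
    simp only [← hQφ]
    exact (Set.image_preimage_eq _ hsurj).symm
  rw [himage, Set.ncard_image_of_injective _ hinj, ncard_mul_eq_zero]

theorem ncard_zeros_of_separatingLeft [Finite K] (hV : Module.finrank K V = 2)
    (hQ : Q.polarBilin.SeparatingLeft) :
    {v | Q v = 0}.ncard = 1 ∨ {v | Q v = 0}.ncard = 2 * Nat.card K - 1 := by
  by_cases! hQ0 : ∃ z, z ≠ 0 ∧ Q z = 0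
  · obtain ⟨z, hz, hQz⟩ := hQ0
    obtain ⟨w, hQw, hzw⟩ := exists_hyperbolic_pair hQ hz hQz
    exact .inr (ncard_zeros_of_hyperbolic_pair hV hQz hQw hzw)
  · have : {v | Q v = 0} = {0} :=
      Set.eq_singleton_iff_unique_mem.mpr
        ⟨QuadraticMap.map_zero Q, fun v hv => by_contra fun h => hQ0 v h hv⟩
    exact .inl (by rw [this, Set.ncard_singleton])

/-- Every line parallel to a nonsingular nucleus `z` meets the cone `Q = 0` exactly once, because
`Q (v + e • z) = Q v + e ^ 2 * Q z` and squaring is bijective. -/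
theorem ncard_zeros_mul_card_of_nucleus [Finite K] [CharP K 2] {z : V}
    (hz : ∀ v, Q.polarBilin v z = 0) (hQz : Q z ≠ 0) :
    {v | Q v = 0}.ncard * Nat.card K = Nat.card V := by
  have hQ (v : V) (e : K) : Q (v + e • z) = Q v + e ^ 2 * Q z := by
    simpa [hz] using map_smul_add_smul (Q := Q) v z 1 e
  rw [← Nat.card_coe_set_eq, ← Nat.card_prod]
  refine Nat.card_congr (.ofBijective (fun p => p.1 + p.2 • z) ⟨?_, fun v => ?_⟩)
  · rintro ⟨⟨v, hv⟩, a⟩ ⟨⟨w, hw⟩, b⟩ (hvw : v + a • z = w + b • z)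
    have hab : a ^ 2 * Q z = b ^ 2 * Q z := by
      simpa [hQ, show Q v = 0 from hv, show Q w = 0 from hw] using congrArg Q hvw
    obtain rfl : a = b := CharTwo.sq_injective (mul_right_cancel₀ hQz hab)
    simpa using hvw
  · obtain ⟨e, he⟩ := surjective_frobenius K 2 (Q v / Q z)
    rw [frobenius_def] at he
    refine ⟨⟨⟨v - e • z, ?_⟩, e⟩, sub_add_cancel v (e • z)⟩
    rw [Set.mem_ofPred, sub_eq_add_neg, ← neg_smul, hQ, neg_sq, he, div_mul_cancel₀ _ hQz,
      CharTwo.add_self_eq_zero]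

end QuadraticForm

section CubicExtension

variable (E F : Type*) [Field E] [Field F] [Algebra E F]

/-- The elements of `F` orthogonal to the set `A` for the trace form of `F/E`. -/
def traceOrthogonal (A : Set F) : Submodule E F :=
  (Algebra.traceForm E F).orthogonal (Submodule.span E A)

variable {E F}

theorem mem_traceOrthogonal {A : Set F} {x : F} :
    x ∈ traceOrthogonal E F A ↔ ∀ y ∈ A, Algebra.trace E F (y * x) = 0 := by
  refine ⟨fun hx y hy => hx y (Submodule.subset_span hy), fun hx y hy => ?_⟩
  induction hy using Submodule.span_induction with
  | mem y hy => exact hx y hy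
  | zero => simp
  | add y z _ _ hy hz => simp_all
  | smul e y _ hy => simp_all

theorem finrank_traceOrthogonal [FiniteDimensional E F] [Algebra.IsSeparable E F] (A : Set F) :
    Module.finrank E (traceOrthogonal E F A) =
      Module.finrank E F - Module.finrank E (Submodule.span E A) :=
  LinearMap.BilinForm.finrank_orthogonal (traceForm_nondegenerate E F) _

theorem finrank_traceOrthogonal_singleton [FiniteDimensional E F] [Algebra.IsSeparable E F] {y : F}
    (hy : y ≠ 0) : Module.finrank E (traceOrthogonal E F {y}) = Module.finrank E F - 1 := by
  rw [finrank_traceOrthogonal, finrank_span_singleton hy]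

theorem trace_algebraMap_of_charTwo [CharP E 2] (h3 : Module.finrank E F = 3) (e : E) :
    Algebra.trace E F (algebraMap E F e) = e := by
  rw [Algebra.trace_algebraMap, h3, succ_nsmul, two_nsmul, CharTwo.add_self_eq_zero, zero_add]

theorem linearIndependent_one_pair {w : F} (hw : w ∉ Set.range (algebraMap E F)) :
    LinearIndependent E ![1, w] := by
  rw [LinearIndependent.pair_iff' one_ne_zero]
  exact fun e he => hw ⟨e, by rw [← he, Algebra.algebraMap_eq_smul_one]⟩

variable [Fintype E] [Finite F]

variable (E F) in
/-- The ternary quadratic form `u ↦ Tr_{F/E}(u ^ (q + 1))` on a cubic extension `F/E`, `q = #E`.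
Its zeros are the cone over a conic of the projective plane of `F/E`. -/
def conicForm : QuadraticForm E F :=
  ((Algebra.traceForm E F).compRight (Frob E F).toLinearMap).toQuadraticMap

theorem conicForm_apply (u : F) : conicForm E F u = Algebra.trace E F (u * Frob E F u) := rfl

variable (h3 : Module.finrank E F = 3)
include h3

theorem algebraMap_trace_eq_add_frobenius_add (x : F) :
    algebraMap E F (Algebra.trace E F x) = x + Frob E F x + Frob E F (Frob E F x) := by
  simp [FiniteField.algebraMap_trace_eq_sum_pow, h3, Finset.sum_range_succ, sq, pow_mul]

theorem algebraMap_norm_eq_mul_frobenius_mul (x : F) :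
    algebraMap E F (Algebra.norm E x) = x * Frob E F x * Frob E F (Frob E F x) := by
  simp [FiniteField.algebraMap_norm_eq_prod_pow, h3, Finset.prod_range_succ, sq, pow_mul]

theorem frobenius_frobenius_frobenius (x : F) : Frob E F (Frob E F (Frob E F x)) = x := by
  simpa [h3] using frobenius_iterate_finrank (K := E) x

theorem polarBilin_conicForm (u v : F) :
    (conicForm E F).polarBilin u v =
      Algebra.trace E F u * Algebra.trace E F v - Algebra.trace E F (u * v) := by
  have hpolar : (conicForm E F).polarBilin u v =
      Algebra.trace E F (u * Frob E F v) + Algebra.trace E F (v * Frob E F u) :=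
    LinearMap.BilinMap.polar_toQuadraticMap u v
  apply (algebraMap E F).injective
  simp only [hpolar, map_sub, map_add, map_mul, algebraMap_trace_eq_add_frobenius_add h3,
    frobenius_frobenius_frobenius h3]
  ring

theorem conicForm_eq_norm_mul_trace_inv {u : F} (hu : u ≠ 0) :
    conicForm E F u = Algebra.norm E u * Algebra.trace E F u⁻¹ := by
  have hu1 : Frob E F u ≠ 0 := by simpa
  have hu2 : Frob E F (Frob E F u) ≠ 0 := by simpa
  apply (algebraMap E F).injective
  simp only [conicForm_apply, map_mul, map_inv₀, algebraMap_norm_eq_mul_frobenius_mul h3,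
    algebraMap_trace_eq_add_frobenius_add h3, frobenius_frobenius_frobenius h3]
  field_simp
  ring
omit h3

variable (E F) in
/-- The nonzero vectors of the cone over the conic `Tr_{F/E}(u ^ (q + 1)) = 0`. -/
def conicCone : Set F := {u | u ≠ 0 ∧ conicForm E F u = 0}

variable (E) in
/-- The number of nonzero vectors of the cone on the plane `Tr_{F/E}(y u) = 0`. -/
def secantCount (y : F) : ℕ := {u ∈ conicCone E F | Algebra.trace E F (y * u) = 0}.ncard

theorem secantCount_algebraMap_mul {e : E} (he : e ≠ 0) (y : F) :
    secantCount E (algebraMap E F e * y) = secantCount E y := by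
  have htrace (u : F) : Algebra.trace E F (algebraMap E F e * y * u) = 0 ↔
      Algebra.trace E F (y * u) = 0 := by
    rw [mul_assoc, ← Algebra.smul_def, map_smul, smul_eq_zero_iff_right he]
  simp only [secantCount, htrace]

include h3

theorem ncard_conicCone_trace_mul_inv (w : F) :
    {u ∈ conicCone E F | Algebra.trace E F (w * u⁻¹) = 0}.ncard + 1 =
      Nat.card (traceOrthogonal E F {1, w}) := by
  have hinv : {u ∈ conicCone E F | Algebra.trace E F (w * u⁻¹) = 0} =
      Inv.inv '' ((traceOrthogonal E F {1, w} : Set F) \ {0}) := by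
    ext u
    rcases eq_or_ne u 0 with rfl | hu
    · simp [conicCone]
    · simp [conicCone, hu, conicForm_eq_norm_mul_trace_inv h3 hu, mem_traceOrthogonal,
        Algebra.norm_eq_zero_iff]
  rw [hinv, Set.ncard_image_of_injective _ inv_injective,
    Set.ncard_sdiff_singleton_add_one (zero_mem _), ← Nat.card_coe_set_eq]
  rfl

theorem ncard_conicCone_trace_mul_inv_of_mem_range {w : F} (hw : w ∈ Set.range (algebraMap E F)) :
    {u ∈ conicCone E F | Algebra.trace E F (w * u⁻¹) = 0}.ncard + 1 = Nat.card E ^ 2 := by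
  have hspan : Submodule.span E {1, w} = Submodule.span E {1} := by
    obtain ⟨e, rfl⟩ := hw
    rw [Set.pair_comm, Submodule.span_insert_eq_span
      (Submodule.mem_span_singleton.mpr ⟨e, (Algebra.algebraMap_eq_smul_one e).symm⟩)]
  rw [ncard_conicCone_trace_mul_inv h3, Module.natCard_eq_pow_finrank (K := E),
    finrank_traceOrthogonal, h3, hspan, finrank_span_singleton one_ne_zero]

theorem ncard_conicCone_trace_mul_inv_of_notMem_range {w : F}
    (hw : w ∉ Set.range (algebraMap E F)) :
    {u ∈ conicCone E F | Algebra.trace E F (w * u⁻¹) = 0}.ncard + 1 = Nat.card E := by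
  have hspan : Module.finrank E (Submodule.span E {1, w}) = 2 := by
    rw [← Matrix.range_cons_cons_empty 1 w ![],
      finrank_span_eq_card (linearIndependent_one_pair hw), Fintype.card_fin]
  rw [ncard_conicCone_trace_mul_inv h3, Module.natCard_eq_pow_finrank (K := E),
    finrank_traceOrthogonal, h3, hspan, pow_one]

theorem ncard_conicCone : (conicCone E F).ncard + 1 = Nat.card E ^ 2 := by
  simpa using ncard_conicCone_trace_mul_inv_of_mem_range h3 (w := 0) ⟨0, map_zero _⟩

omit h3 in
theorem secantCount_add_one (y : F) :
    secantCount E y + 1 =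
      {v | (conicForm E F).restrict (traceOrthogonal E F {y}) v = 0}.ncard := by
  have himage : insert 0 {u ∈ conicCone E F | Algebra.trace E F (y * u) = 0} =
      Subtype.val '' {v | (conicForm E F).restrict (traceOrthogonal E F {y}) v = 0} := by
    ext u
    rcases eq_or_ne u 0 with rfl | hu
    · simp
    · simp [conicCone, hu, mem_traceOrthogonal, and_comm]
  have h0 : (0 : F) ∉ {u ∈ conicCone E F | Algebra.trace E F (y * u) = 0} := by
    simp [conicCone]
  rw [secantCount, ← Set.ncard_insert_of_notMem h0, himage,
    Set.ncard_image_of_injective _ Subtype.val_injective]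

theorem polarBilin_conicForm_one [CharP E 2] (u : F) : (conicForm E F).polarBilin u 1 = 0 := by
  have htrace : Algebra.trace E F (1 : F) = 1 := by
    simpa using trace_algebraMap_of_charTwo h3 (1 : E)
  rw [polarBilin_conicForm h3, mul_one, htrace, mul_one, sub_self]

theorem conicForm_one [CharP E 2] : conicForm E F 1 = 1 := by
  simpa [conicForm_apply] using trace_algebraMap_of_charTwo h3 (1 : E)

theorem secantCount_of_trace_eq_zero [CharP E 2] {y : F} (hy : y ≠ 0)
    (hty : Algebra.trace E F y = 0) : secantCount E y + 1 = Nat.card E := by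
  have h1 : 1 ∈ traceOrthogonal E F {y} := by simpa [mem_traceOrthogonal] using hty
  have hcount := ncard_zeros_mul_card_of_nucleus
    (Q := (conicForm E F).restrict (traceOrthogonal E F {y})) (z := ⟨1, h1⟩)
    (fun v => polarBilin_conicForm_one h3 (v : F))
    (ne_of_eq_of_ne (conicForm_one h3) one_ne_zero)
  rw [← secantCount_add_one, Module.natCard_eq_pow_finrank (K := E) (V := traceOrthogonal E F {y}),
    finrank_traceOrthogonal_singleton hy, h3, sq] at hcount
  exact Nat.eq_of_mul_eq_mul_right Nat.card_pos hcount

theorem eq_algebraMap_trace_of_polarBilin_conicForm_eq_zero {u : F}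
    (hu : ∀ v, (conicForm E F).polarBilin u v = 0) : u = algebraMap E F (Algebra.trace E F u) := by
  refine (sub_eq_zero.mp ((traceForm_nondegenerate E F).1 _ fun v => ?_)).symm
  rw [Algebra.traceForm_apply, sub_mul, map_sub, ← Algebra.smul_def, map_smul, smul_eq_mul,
    ← polarBilin_conicForm h3, hu]

theorem separatingLeft_polarBilin_conicForm_restrict [CharP E 2] {y : F}
    (hty : Algebra.trace E F y ≠ 0) :
    ((conicForm E F).restrict (traceOrthogonal E F {y})).polarBilin.SeparatingLeft := by
  rintro ⟨u, hu⟩ hpolar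
  have hpolar' (v : F) : (conicForm E F).polarBilin u v = 0 := by
    set e := Algebra.trace E F (y * v) / Algebra.trace E F y with he
    have hv : v - e • 1 ∈ traceOrthogonal E F {y} := by
      simp [mem_traceOrthogonal, mul_sub, he, hty]
    have : (conicForm E F).polarBilin u (v - e • 1) = 0 := hpolar ⟨v - e • 1, hv⟩
    rwa [map_sub, map_smul, polarBilin_conicForm_one h3, smul_zero, sub_zero] at this
  have hu' := eq_algebraMap_trace_of_polarBilin_conicForm_eq_zero h3 hpolar'
  have htu : Algebra.trace E F (y * u) = 0 := mem_traceOrthogonal.mp hu y rfl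
  rw [hu', mul_comm, ← Algebra.smul_def, map_smul, smul_eq_mul, mul_eq_zero_iff_right hty] at htu
  exact Subtype.ext (by simpa [htu] using hu')

theorem secantCount_of_trace_ne_zero [CharP E 2] {y : F} (hty : Algebra.trace E F y ≠ 0) :
    secantCount E y = 0 ∨ secantCount E y = 2 * (Nat.card E - 1) := by
  have hy : y ≠ 0 := by
    rintro rfl
    simp at hty
  have hdim : Module.finrank E (traceOrthogonal E F {y}) = 2 := by
    rw [finrank_traceOrthogonal_singleton hy, h3]
  have hcount := ncard_zeros_of_separatingLeft hdim
    (separatingLeft_polarBilin_conicForm_restrict h3 hty)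
  rw [← secantCount_add_one] at hcount
  omega

end CubicExtension

section SecantSums

variable {E F G R : Type*} [Field E] [Field F] [Field G] [Algebra E F] [Algebra F G]
  [Fintype E] [Finite F] [Fintype G] [CommRing R]

variable (E F) in
open Classical in
/-- The sum of `f` over the nonzero `x : G` whose norm to `F` defines a plane meeting the conic cone
in exactly `n` nonzero vectors. -/
def secantSum (f : G → R) (n : ℕ) : R :=
  ∑ x : G with x ≠ 0 ∧ secantCount E (Algebra.norm F x) = n, f x

variable [CharP E 2] (h3 : Module.finrank E F = 3)
include h3

theorem secantCount_eq_card_sub_one_iff {y : F} (hy : y ≠ 0) :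
    secantCount E y = Fintype.card E - 1 ↔ Algebra.trace E F y = 0 := by
  have hE : 1 < Nat.card E := Finite.one_lt_card
  rw [← Nat.card_eq_fintype_card]
  refine ⟨fun hcount => by_contra fun hty => ?_, fun hty => ?_⟩
  · have := secantCount_of_trace_ne_zero h3 hty
    omega
  · have := secantCount_of_trace_eq_zero h3 hy hty
    omega

theorem secantCount_mem {y : F} (hy : y ≠ 0) :
    secantCount E y ∈ ({0, Fintype.card E - 1, 2 * (Fintype.card E - 1)} : Finset ℕ) := by
  rcases eq_or_ne (Algebra.trace E F y) 0 with hty | hty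
  · simp [(secantCount_eq_card_sub_one_iff h3 hy).mpr hty]
  · have := secantCount_of_trace_ne_zero h3 hty
    simp only [Finset.mem_insert, Finset.mem_singleton, ← Nat.card_eq_fintype_card]
    tauto

open Classical in
theorem sum_secantCount_mul (φ : ℕ → R) (f : G → R) :
    ∑ x : G with x ≠ 0, φ (secantCount E (Algebra.norm F x)) * f x =
      φ 0 * secantSum E F f 0 + φ (Fintype.card E - 1) * secantSum E F f (Fintype.card E - 1) +
        φ (2 * (Fintype.card E - 1)) * secantSum E F f (2 * (Fintype.card E - 1)) := by
  have hE : 1 < Fintype.card E := Fintype.one_lt_card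
  rw [← Finset.sum_fiberwise_of_maps_to (g := fun x => secantCount E (Algebra.norm F x))
    fun x hx => secantCount_mem h3 (Algebra.norm_ne_zero_iff.mpr (Finset.mem_filter.mp hx).2)]
  have hfiber (n : ℕ) : ∑ x ∈ {x : G | x ≠ 0} with secantCount E (Algebra.norm F x) = n,
      φ (secantCount E (Algebra.norm F x)) * f x = φ n * secantSum E F f n := by
    rw [secantSum, Finset.mul_sum, Finset.filter_filter]
    exact Finset.sum_congr rfl fun x hx => by rw [(Finset.mem_filter.mp hx).2.2]
  simp only [hfiber]
  rw [Finset.sum_insert, Finset.sum_insert, Finset.sum_singleton, add_assoc] <;>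
    simp only [Finset.mem_insert, Finset.mem_singleton] <;> omega

theorem secantSum_add_secantSum_add_secantSum [IsDomain R] {χ : AddChar E R} (hχ : χ ≠ 1) {c : G}
    (hc : c ≠ 0) :
    secantSum E F (AddChar.mulShift (traceChar G (traceChar F χ)) c) 0 +
      secantSum E F (AddChar.mulShift (traceChar G (traceChar F χ)) c) (Fintype.card E - 1) +
      secantSum E F (AddChar.mulShift (traceChar G (traceChar F χ)) c) (2 * (Fintype.card E - 1)) =
    -1 := by
  classical
  set ψ := AddChar.mulShift (traceChar G (traceChar F χ)) c
  have hψ : ψ ≠ 1 :=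
    AddChar.IsPrimitive.of_ne_one (traceChar_ne_one (F := G) (traceChar_ne_one (F := F) hχ)) hc
  have hsum := Fintype.sum_eq_add_sum_compl 0 ψ
  rw [AddChar.sum_eq_zero_of_ne_one hψ, AddChar.map_zero_eq_one] at hsum
  have hfiber := sum_secantCount_mul h3 (1 : ℕ → R) ψ
  simp only [Pi.one_apply, one_mul] at hfiber
  rw [← hfiber, eq_neg_iff_add_eq_zero, add_comm, hsum]
  congr! 2
  ext x
  simp

omit [CharP E 2]
variable [IsDomain R] [CharZero R] (h2 : Module.finrank F G = 2) {χ : AddChar E R}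
  (hχ : χ ≠ 1) {c : G} (hc : c ≠ 0)

include h2 hχ hc

theorem sum_trace_mul_norm_eq_zero [DecidableEq E] {u : F} (hu : u ≠ 0) :
    ∑ x : G with Algebra.trace E F (u * Algebra.norm F x) = 0,
        AddChar.mulShift (traceChar G (traceChar F χ)) c x =
      (Fintype.card E : R) ^ 2 - if Algebra.trace E F (Algebra.norm F c * u⁻¹) = 0
        then (Fintype.card E : R) ^ 3 else 0 := by
  have := Fintype.ofFinite F
  have hcard : (Fintype.card F : R) = Fintype.card E ^ 3 := by
    rw [Module.card_eq_pow_finrank (K := E), h3, Nat.cast_pow]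
  apply mul_left_cancel₀ (Nat.cast_ne_zero.mpr Fintype.card_ne_zero : (Fintype.card E : R) ≠ 0)
  simp only [AddChar.mulShift_apply]
  rw [card_mul_sum_trace_norm_eq_zero h2 hχ hu hc, hcard]
  split_ifs <;> ring

theorem sum_ne_zero_trace_mul_norm_eq_zero [DecidableEq E] [DecidableEq G] {u : F} (hu : u ≠ 0) :
    ∑ x : G with x ≠ 0 ∧ Algebra.trace E F (u * Algebra.norm F x) = 0,
        AddChar.mulShift (traceChar G (traceChar F χ)) c x =
      (Fintype.card E : R) ^ 2 - 1 - if Algebra.trace E F (Algebra.norm F c * u⁻¹) = 0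
        then (Fintype.card E : R) ^ 3 else 0 := by
  have h0 : (0 : G) ∈ ({x | Algebra.trace E F (u * Algebra.norm F x) = 0} : Finset G) := by simp
  have hfilter : ({x | x ≠ 0 ∧ Algebra.trace E F (u * Algebra.norm F x) = 0} : Finset G) =
      ({x | Algebra.trace E F (u * Algebra.norm F x) = 0} : Finset G).erase 0 := by
    ext x
    simp
  have := Finset.add_sum_erase _ (AddChar.mulShift (traceChar G (traceChar F χ)) c) h0
  rw [sum_trace_mul_norm_eq_zero h3 h2 hχ hc hu, AddChar.map_zero_eq_one] at this
  rw [hfilter, eq_sub_of_add_eq' this]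
  ring

theorem secantSum_card_sub_one [CharP E 2] [DecidableEq E] :
    secantSum E F (AddChar.mulShift (traceChar G (traceChar F χ)) c) (Fintype.card E - 1) =
      (Fintype.card E : R) ^ 2 - 1 - if Algebra.trace E F (Algebra.norm F c) = 0
        then (Fintype.card E : R) ^ 3 else 0 := by
  classical
  have := sum_ne_zero_trace_mul_norm_eq_zero h3 h2 hχ hc one_ne_zero
  rw [inv_one, mul_one] at this
  rw [← this, secantSum]
  congr! 2 with x
  refine and_congr_right fun hx => ?_
  rw [one_mul, secantCount_eq_card_sub_one_iff h3 (Algebra.norm_ne_zero_iff.mpr hx)]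

open Classical in
theorem sum_secantCount_mul_traceChar :
    ∑ x : G with x ≠ 0, (secantCount E (Algebra.norm F x) : R) *
        AddChar.mulShift (traceChar G (traceChar F χ)) c x =
      (conicCone E F).ncard * ((Fintype.card E : R) ^ 2 - 1) -
        {u ∈ conicCone E F | Algebra.trace E F (Algebra.norm F c * u⁻¹) = 0}.ncard *
          (Fintype.card E : R) ^ 3 := by
  have := Fintype.ofFinite F
  set ψ := AddChar.mulShift (traceChar G (traceChar F χ)) c
  set O := (conicCone E F).toFinset
  have hcount (p : F → Prop) :
      ({u ∈ conicCone E F | p u}.ncard : R) = ∑ u ∈ O, if p u then 1 else 0 := by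
    rw [Finset.sum_boole, Set.ncard_eq_toFinset_card']
    congr! 2
    ext u
    simp [O]
  calc ∑ x : G with x ≠ 0, (secantCount E (Algebra.norm F x) : R) * ψ x
    _ = ∑ x : G with x ≠ 0, ∑ u ∈ O,
          if Algebra.trace E F (u * Algebra.norm F x) = 0 then ψ x else 0 := by
        refine Finset.sum_congr rfl fun x _ => ?_
        simp only [secantCount, hcount, Finset.sum_mul, ite_mul, one_mul, zero_mul,
          mul_comm (Algebra.norm F x)]
    _ = ∑ u ∈ O, ∑ x : G with x ≠ 0 ∧ Algebra.trace E F (u * Algebra.norm F x) = 0, ψ x := by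
        rw [Finset.sum_comm]
        simp only [← Finset.sum_filter, Finset.filter_filter]
    _ = ∑ u ∈ O, ((Fintype.card E : R) ^ 2 - 1 -
          (if Algebra.trace E F (Algebra.norm F c * u⁻¹) = 0 then 1 else 0) *
            (Fintype.card E : R) ^ 3) := by
        refine Finset.sum_congr rfl fun u hu => ?_
        have hu0 : u ≠ 0 := (Set.mem_toFinset.mp hu).1
        rw [sum_ne_zero_trace_mul_norm_eq_zero h3 h2 hχ hc hu0, ite_mul, one_mul, zero_mul]
    _ = _ := by
        rw [Finset.sum_sub_distrib, ← Finset.sum_mul, ← hcount, Finset.sum_const, nsmul_eq_mul,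
          Set.ncard_eq_toFinset_card' (conicCone E F)]

theorem secantSum_card_sub_one_add_two_mul [CharP E 2]
    [Decidable (Algebra.norm F c ∈ Set.range (algebraMap E F))] :
    secantSum E F (AddChar.mulShift (traceChar G (traceChar F χ)) c) (Fintype.card E - 1) +
      2 * secantSum E F (AddChar.mulShift (traceChar G (traceChar F χ)) c)
        (2 * (Fintype.card E - 1)) =
    if Algebra.norm F c ∈ Set.range (algebraMap E F) then
      ((Fintype.card E : R) + 1) * (Fintype.card E ^ 2 - 1 - Fintype.card E ^ 3)
    else (Fintype.card E : R) ^ 2 - Fintype.card E - 1 := by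
  classical
  have hE : 1 < Fintype.card E := Fintype.one_lt_card
  set q := (Fintype.card E : R) with hq
  have hq1 : q - 1 ≠ 0 := by
    rw [sub_ne_zero, hq, Nat.cast_ne_one]
    exact hE.ne'
  have natCast_eq {n m : ℕ} (h : n + 1 = m) : (n : R) = m - 1 :=
    eq_sub_of_add_eq (by exact_mod_cast h)
  have hsum := sum_secantCount_mul_traceChar h3 h2 hχ hc
  rw [sum_secantCount_mul h3 (fun n => (n : R)), natCast_eq (ncard_conicCone h3)] at hsum
  push_cast [Nat.cast_sub hE.le, Nat.card_eq_fintype_card] at hsum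
  apply mul_left_cancel₀ hq1
  split_ifs with hc
  · rw [natCast_eq (ncard_conicCone_trace_mul_inv_of_mem_range h3 hc)] at hsum
    push_cast [Nat.card_eq_fintype_card] at hsum
    linear_combination hsum
  · rw [natCast_eq (ncard_conicCone_trace_mul_inv_of_notMem_range h3 hc)] at hsum
    push_cast [Nat.card_eq_fintype_card] at hsum
    linear_combination hsum

end SecantSums

section SignCharacter

/-- The additive character `0 ↦ 1`, `1 ↦ -1` of `𝔽₂`, so that `psi K = signChar ∘ Tr_{K/𝔽₂}`. -/
def signChar : AddChar (ZMod 2) ℤ :=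
  AddChar.zmodChar 2 (ζ := -1) (by norm_num)

theorem signChar_apply (t : ZMod 2) : signChar t = if t = 0 then 1 else -1 := by
  fin_cases t <;> rfl

theorem signChar_ne_one : signChar ≠ 1 :=
  AddChar.ne_one_iff.mpr ⟨1, by decide⟩

theorem psi_eq_traceChar {K : Type*} [Field K] [Algebra (ZMod 2) K] (x : K) :
    psi K x = traceChar K signChar x := by
  rw [psi, traceChar_apply, signChar_apply]

theorem psiSum_eq_sum {K : Type*} [Field K] [Fintype K] [Algebra (ZMod 2) K] (c : K) (p : K → Prop)
    [DecidablePred p] :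
    psiSum K c {x | p x} = ∑ x with p x, AddChar.mulShift (traceChar K signChar) c x := by
  rw [psiSum, finsum_mem_eq_finite_toFinset_sum _ (Set.toFinite _)]
  exact Finset.sum_congr (by ext; simp) fun x _ => psi_eq_traceChar _

end SignCharacter

section PrimitiveElement

variable {K L : Type*} [Field K] [Field L] [Fintype K] [Finite L] [Algebra K L]

theorem ne_zero_of_forall_eq_pow {g : K} (hg : ∀ x : K, x ≠ 0 → ∃ n : ℕ, x = g ^ n)
    (hK : 2 < Fintype.card K) : g ≠ 0 := by
  classical
  rintro rfl
  obtain ⟨x, -, hx⟩ := Finset.exists_mem_notMem_of_card_lt_card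
    (Finset.card_le_two.trans_lt hK : ({0, 1} : Finset K).card < Finset.univ.card)
  simp only [Finset.mem_insert, Finset.mem_singleton, not_or] at hx
  obtain ⟨_ | n, rfl⟩ := hg x hx.1
  · exact hx.2 (pow_zero 0)
  · exact hx.1 (zero_pow n.succ_ne_zero)

theorem zpow_eq_one_iff_card_sub_one_dvd {g : K} (hg0 : g ≠ 0)
    (hg : ∀ x : K, x ≠ 0 → ∃ n : ℕ, x = g ^ n) (a : ℤ) :
    g ^ a = 1 ↔ (Fintype.card K : ℤ) - 1 ∣ a := by
  classical
  have hmem (x : Kˣ) : x ∈ Subgroup.zpowers (Units.mk0 g hg0) := by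
    obtain ⟨n, hn⟩ := hg x x.ne_zero
    exact ⟨n, Units.ext (by simp [hn])⟩
  have horder : (orderOf (Units.mk0 g hg0) : ℤ) = Fintype.card K - 1 := by
    rw [orderOf_eq_card_of_forall_mem_zpowers hmem, Nat.card_eq_fintype_card, Fintype.card_units,
      Nat.cast_sub Fintype.card_pos, Nat.cast_one]
  rw [← horder, orderOf_dvd_iff_zpow_eq_one, Units.ext_iff]
  simp

theorem mem_range_algebraMap_iff_pow_card {x : L} :
    x ∈ Set.range (algebraMap K L) ↔ x ^ Fintype.card K = x := by
  refine ⟨?_, fun hx => (IsGalois.mem_range_algebraMap_iff_fixed x).mpr fun σ => ?_⟩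
  · rintro ⟨e, rfl⟩
    rw [← map_pow, FiniteField.pow_card]
  · obtain ⟨n, rfl⟩ := (FiniteField.bijective_frobeniusAlgEquivOfAlgebraic_pow K L).2 σ
    rw [AlgEquiv.coe_pow]
    exact Function.iterate_fixed hx n

theorem norm_eq_of_algebraMap_eq_pow (h : Module.finrank K L = 2) {y : K} {x : L}
    (hxy : algebraMap K L y = x ^ (Fintype.card K + 1)) : Algebra.norm K x = y := by
  apply (algebraMap K L).injective
  rw [algebraMap_norm_eq_mul_frobenius h, hxy, pow_succ']
  rfl

end PrimitiveElement

section CyclotomicClasses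

variable {s : ℕ} {E F : Type*} [Field E] [Fintype E] [Field F] [Finite F] [Algebra E F]
  (hE : Fintype.card E = 2 ^ s) (h3 : Module.finrank E F = 3)
include hE h3

theorem trFE_eq_algebraMap_trace (x : F) : trFE s x = algebraMap E F (Algebra.trace E F x) := by
  rw [algebraMap_trace_eq_add_frobenius_add h3, trFE, mul_comm 2 s, pow_mul, sq, pow_mul, ← hE]
  rfl

theorem ncard_Sa (ω : F) (a : ℤ) : (Sa s ω a).ncard = secantCount E (ω ^ a) := by
  simp only [Sa, secantCount, conicCone, conicForm_apply, trFE_eq_algebraMap_trace hE h3,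
    map_eq_zero_iff _ (algebraMap E F).injective, pow_succ', ← hE, Set.mem_ofPred_eq, and_assoc]
  rfl

variable {ω : F} (hω0 : ω ≠ 0) (hω : ∀ x : F, x ≠ 0 → ∃ n : ℕ, x = ω ^ n)
include hω0 hω

theorem zpow_mem_range_algebraMap_iff (a : ℤ) :
    ω ^ a ∈ Set.range (algebraMap E F) ↔ (a : ZMod (Mof s)) = 0 := by
  have := Fintype.ofFinite F
  have hcard : (Fintype.card F : ℤ) - 1 = (Mof s : ℤ) * (Fintype.card E - 1) := by
    rw [Module.card_eq_pow_finrank (K := E), h3, hE, Mof]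
    push_cast
    ring
  have hq1 : (Fintype.card E : ℤ) - 1 ≠ 0 := by
    have := Fintype.one_lt_card (α := E)
    omega
  have hpow : (ω ^ a) ^ Fintype.card E = ω ^ a ↔ ω ^ (a * ((Fintype.card E : ℤ) - 1)) = 1 := by
    rw [mul_sub_one, zpow_sub₀ hω0, zpow_mul, zpow_natCast, div_eq_one_iff_eq (zpow_ne_zero a hω0)]
  rw [mem_range_algebraMap_iff_pow_card, hpow, zpow_eq_one_iff_card_sub_one_dvd hω0 hω, hcard,
    mul_dvd_mul_iff_right hq1, ZMod.intCast_zmod_eq_zero_iff_dvd]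

theorem secantCount_zpow_congr {a b : ℤ} (hab : (a : ZMod (Mof s)) = b) :
    secantCount E (ω ^ a) = secantCount E (ω ^ b) := by
  have hsub : ((a - b : ℤ) : ZMod (Mof s)) = 0 := by rw [Int.cast_sub, hab, sub_self]
  obtain ⟨e, he⟩ := (zpow_mem_range_algebraMap_iff hE h3 hω0 hω (a - b)).mpr hsub
  have he0 : e ≠ 0 := by
    rintro rfl
    exact zpow_ne_zero (a - b) hω0 (by rw [← he, map_zero])
  rw [← secantCount_algebraMap_mul he0 (ω ^ b), he, ← zpow_add₀ hω0, sub_add_cancel]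

theorem ncard_Sa_val (a : ℤ) :
    (Sa s ω ((a : ZMod (Mof s)).val : ℤ)).ncard = secantCount E (ω ^ a) := by
  have : NeZero (Mof s) := ⟨by simp [Mof]⟩
  rw [ncard_Sa hE h3]
  exact secantCount_zpow_congr hE h3 hω0 hω (by simp)

theorem intCast_mem_T1_iff [CharP E 2] (a : ℤ) :
    (a : ZMod (Mof s)) ∈ T1 s ω ↔ Algebra.trace E F (ω ^ a) = 0 := by
  rw [← secantCount_eq_card_sub_one_iff h3 (zpow_ne_zero a hω0), hE,
    ← ncard_Sa_val hE h3 hω0 hω]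
  rfl

theorem intCast_notMem_T1_of_eq_zero [CharP E 2] {a : ℤ} (ha : (a : ZMod (Mof s)) = 0) :
    (a : ZMod (Mof s)) ∉ T1 s ω := by
  obtain ⟨e, he⟩ := (zpow_mem_range_algebraMap_iff hE h3 hω0 hω a).mpr ha
  rw [intCast_mem_T1_iff hE h3 hω0 hω, ← he, trace_algebraMap_of_charTwo h3]
  rintro rfl
  exact zpow_ne_zero a hω0 (by rw [← he, map_zero])

variable {G : Type*} [Field G] [Finite G] [Algebra F G] {γ : G} (hγ0 : γ ≠ 0)
  (hγ : ∀ x : G, x ≠ 0 → ∃ n : ℕ, x = γ ^ n) (hnorm : Algebra.norm F γ = ω)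
include hγ0 hγ hnorm

theorem mem_Rclass_iff (n : ℕ) (x : G) :
    x ∈ Rclass s γ {i | (Sa s ω (i.val : ℤ)).ncard = n} ↔
      x ≠ 0 ∧ secantCount E (Algebra.norm F x) = n := by
  simp only [Rclass, cyc, Set.mem_iUnion, Set.mem_ofPred_eq, exists_prop]
  constructor
  · rintro ⟨i, hi, t, rfl⟩
    refine ⟨zpow_ne_zero _ hγ0, ?_⟩
    rw [Algebra.norm_zpow, hnorm, ← hi, ncard_Sa hE h3]
    exact secantCount_zpow_congr hE h3 hω0 hω (by
      rw [Int.cast_add, Int.cast_mul, Int.cast_natCast (Mof s), ZMod.natCast_self, zero_mul,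
        add_zero])
  · rintro ⟨hx, hcount⟩
    obtain ⟨m, rfl⟩ := hγ x hx
    rw [map_pow, hnorm, ← zpow_natCast, ← ncard_Sa_val hE h3 hω0 hω] at hcount
    have hdvd : (Mof s : ℤ) ∣ m - ((m : ℤ) : ZMod (Mof s)).val := by
      have : NeZero (Mof s) := ⟨by simp [Mof]⟩
      rw [← ZMod.intCast_eq_intCast_iff_dvd_sub, Int.cast_natCast, ZMod.natCast_rightInverse]
    obtain ⟨t, ht⟩ := hdvd
    exact ⟨_, hcount, t, by rw [← ht, add_sub_cancel, zpow_natCast]⟩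

variable [Algebra (ZMod 2) E] [Algebra (ZMod 2) G]

theorem psiSum_Rclass [Fintype G] (c : G) (n : ℕ) :
    psiSum G c (Rclass s γ {i | (Sa s ω (i.val : ℤ)).ncard = n}) =
      secantSum E F (AddChar.mulShift (traceChar G (traceChar F (traceChar E signChar))) c) n := by
  classical
  let : Algebra (ZMod 2) F := ((algebraMap E F).comp (algebraMap (ZMod 2) E)).toAlgebra
  have : IsScalarTower (ZMod 2) E F := IsScalarTower.of_algebraMap_eq' (Subsingleton.elim _ _)
  have : IsScalarTower (ZMod 2) F G := IsScalarTower.of_algebraMap_eq' (Subsingleton.elim _ _)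
  have hset : Rclass s γ {i | (Sa s ω (i.val : ℤ)).ncard = n} =
      {x | x ≠ 0 ∧ secantCount E (Algebra.norm F x) = n} :=
    Set.ext (mem_Rclass_iff hE h3 hω0 hω hγ0 hγ hnorm n)
  rw [hset, psiSum_eq_sum, secantSum, traceChar_traceChar (E := ZMod 2) (F := E) (G := F),
    traceChar_traceChar (E := ZMod 2) (F := F)]

theorem psiSum_Rclass_T1_add_T2_add_T3 (a : ℤ) :
    psiSum G (γ ^ a) (Rclass s γ (T1 s ω)) + psiSum G (γ ^ a) (Rclass s γ (T2 s ω)) +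
      psiSum G (γ ^ a) (Rclass s γ (T3 s ω)) = -1 := by
  have := Fintype.ofFinite G
  have : CharP E 2 := charP_of_injective_algebraMap (algebraMap (ZMod 2) E).injective 2
  have hsum := secantSum_add_secantSum_add_secantSum h3
    (traceChar_ne_one (F := E) signChar_ne_one) (zpow_ne_zero a hγ0)
  simp only [← psiSum_Rclass hE h3 hω0 hω hγ0 hγ hnorm, hE] at hsum
  rw [T1, T2, T3, ← hsum]
  ring

variable (h2 : Module.finrank F G = 2)
include h2

open Classical in
theorem psiSum_Rclass_T1 (a : ℤ) :
    psiSum G (γ ^ a) (Rclass s γ (T1 s ω)) =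
      (2 ^ s) ^ 2 - 1 - if (a : ZMod (Mof s)) ∈ T1 s ω then (2 ^ s) ^ 3 else 0 := by
  have := Fintype.ofFinite G
  have : CharP E 2 := charP_of_injective_algebraMap (algebraMap (ZMod 2) E).injective 2
  have hsum := secantSum_card_sub_one h3 h2 (traceChar_ne_one (F := E) signChar_ne_one)
    (zpow_ne_zero a hγ0)
  rw [← psiSum_Rclass hE h3 hω0 hω hγ0 hγ hnorm, Algebra.norm_zpow, hnorm, hE, Nat.cast_pow,
    Nat.cast_ofNat] at hsum
  simp only [intCast_mem_T1_iff hE h3 hω0 hω]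
  exact hsum

open Classical in
theorem psiSum_Rclass_T1_add_two_mul_T2 (a : ℤ) :
    psiSum G (γ ^ a) (Rclass s γ (T1 s ω)) + 2 * psiSum G (γ ^ a) (Rclass s γ (T2 s ω)) =
      if (a : ZMod (Mof s)) = 0 then (2 ^ s + 1) * ((2 ^ s) ^ 2 - 1 - (2 ^ s) ^ 3)
      else (2 ^ s) ^ 2 - 2 ^ s - 1 := by
  have := Fintype.ofFinite G
  have : CharP E 2 := charP_of_injective_algebraMap (algebraMap (ZMod 2) E).injective 2
  have hsum := secantSum_card_sub_one_add_two_mul h3 h2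
    (traceChar_ne_one (F := E) signChar_ne_one) (zpow_ne_zero a hγ0)
  simp only [← psiSum_Rclass hE h3 hω0 hω hγ0 hγ hnorm, Algebra.norm_zpow, hnorm, hE,
    Nat.cast_pow, Nat.cast_ofNat, zpow_mem_range_algebraMap_iff hE h3 hω0 hω] at hsum
  exact hsum

end CyclotomicClasses

theorem finrank_eq_of_card_eq_pow {K L : Type*} [Field K] [Fintype K] [Field L] [Fintype L]
    [Algebra K L] {d : ℕ} (h : Fintype.card L = Fintype.card K ^ d) : Module.finrank K L = d :=
  Nat.pow_right_injective Fintype.one_lt_card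
    ((Module.card_eq_pow_finrank (K := K) (V := L)).symm.trans h)

theorem exists_algebra_card_eq {p m n : ℕ} [Fact p.Prime] {F : Type*} [Field F] [Fintype F]
    [Algebra (ZMod p) F] (hF : Fintype.card F = p ^ n) (hm : m ≠ 0) (hmn : m ∣ n) :
    ∃ (E : Type) (_ : Field E) (_ : Fintype E) (_ : Algebra (ZMod p) E) (_ : Algebra E F),
      Fintype.card E = p ^ m := by
  have hrank : Module.finrank (ZMod p) F = n :=
    finrank_eq_of_card_eq_pow (by rw [ZMod.card, hF])
  obtain ⟨f⟩ := FiniteField.nonempty_algHom_of_finrank_dvd (F := ZMod p) (K := GaloisField p m)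
    (L := F) (by rwa [GaloisField.finrank p hm, hrank])
  have hcard := GaloisField.card p m hm
  have := Nat.finite_of_card_ne_zero (hcard ▸ pow_ne_zero m (Fact.out : p.Prime).ne_zero)
  have := Fintype.ofFinite (GaloisField p m)
  exact ⟨GaloisField p m, inferInstance, inferInstance, inferInstance, f.toRingHom.toAlgebra,
    by rw [← Nat.card_eq_fintype_card, hcard]⟩

theorem statement16 (s : ℕ) (hs : 1 ≤ s) (F G : Type*) [Field F] [Fintype F] [Algebra (ZMod 2) F]
    [Field G] [Fintype G] [Algebra (ZMod 2) G]
    (hF : Fintype.card F = 2 ^ (3 * s)) (hG : Fintype.card G = 2 ^ (6 * s))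
    (f : F →+* G) (γ : G) (hγ : ∀ x : G, x ≠ 0 → ∃ n : ℕ, x = γ ^ n)
    (ω : F) (hω : f ω = γ ^ (2 ^ (3 * s) + 1))
    (hωgen : ∀ x : F, x ≠ 0 → ∃ n : ℕ, x = ω ^ n) :
    ∀ a : ℤ,
      ((a : ZMod (Mof s)) ∈ T1 s ω →
        psiSum G (γ ^ a) (Rclass s γ (T1 s ω)) = -(2 ^ (3 * s)) + 2 ^ (2 * s) - 1) ∧
      ((a : ZMod (Mof s)) ∉ T1 s ω →
        psiSum G (γ ^ a) (Rclass s γ (T1 s ω)) = 2 ^ (2 * s) - 1) ∧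
      ((a : ZMod (Mof s)) = 0 →
        psiSum G (γ ^ a) (Rclass s γ (T2 s ω)) =
          2 ^ (s - 1) * (2 ^ s + 1) * (-(2 ^ (2 * s)) + 2 ^ s - 1)) ∧
      ((a : ZMod (Mof s)) ∈ T1 s ω →
        psiSum G (γ ^ a) (Rclass s γ (T2 s ω)) = 2 ^ (s - 1) * (2 ^ (2 * s) - 1)) ∧
      ((a : ZMod (Mof s)) ≠ 0 → (a : ZMod (Mof s)) ∉ T1 s ω →
        psiSum G (γ ^ a) (Rclass s γ (T2 s ω)) = -(2 ^ (s - 1))) ∧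
      ((a : ZMod (Mof s)) = 0 →
        psiSum G (γ ^ a) (Rclass s γ (T3 s ω)) =
          2 ^ (s - 1) * (2 ^ s - 1) * (2 ^ (2 * s) + 2 ^ s - 1)) ∧
      ((a : ZMod (Mof s)) ∈ T1 s ω →
        psiSum G (γ ^ a) (Rclass s γ (T3 s ω)) = 2 ^ (s - 1) * (2 ^ s - 1) ^ 2) ∧
      ((a : ZMod (Mof s)) ≠ 0 → (a : ZMod (Mof s)) ∉ T1 s ω →
        psiSum G (γ ^ a) (Rclass s γ (T3 s ω)) = 2 ^ (s - 1) * (1 - 2 ^ (s + 1))) := by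
  have hFpos : 2 ^ 3 ≤ Fintype.card F := hF ▸ Nat.pow_le_pow_right two_pos (by omega)
  have hGpos : 2 ^ 6 ≤ Fintype.card G := hG ▸ Nat.pow_le_pow_right two_pos (by omega)
  have hω0 := ne_zero_of_forall_eq_pow hωgen (by omega)
  have hγ0 := ne_zero_of_forall_eq_pow hγ (by omega)
  let : Algebra F G := f.toAlgebra
  obtain ⟨E, _, _, _, _, hE⟩ :=
    exists_algebra_card_eq hF (Nat.one_le_iff_ne_zero.mp hs) (dvd_mul_left s 3)
  have h3 : Module.finrank E F = 3 :=
    finrank_eq_of_card_eq_pow (by rw [hE, hF, mul_comm, pow_mul])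
  have h2 : Module.finrank F G = 2 :=
    finrank_eq_of_card_eq_pow (by rw [hF, hG, ← pow_mul]; congr 1; ring)
  have hnorm : Algebra.norm F γ = ω := norm_eq_of_algebraMap_eq_pow h2 (hF ▸ hω)
  have : CharP E 2 := charP_of_injective_algebraMap (algebraMap (ZMod 2) E).injective 2
  intro a
  have hsum := psiSum_Rclass_T1_add_T2_add_T3 hE h3 hω0 hωgen hγ0 hγ hnorm a
  have hT1 := psiSum_Rclass_T1 hE h3 hω0 hωgen hγ0 hγ hnorm h2 a
  have hT2 := psiSum_Rclass_T1_add_two_mul_T2 hE h3 hω0 hωgen hγ0 hγ hnorm h2 a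
  have hdisj := intCast_notMem_T1_of_eq_zero hE h3 hω0 hωgen (a := a)
  have hq : (2 : ℤ) ^ s = 2 * 2 ^ (s - 1) := (mul_pow_sub_one (by omega) 2).symm
  rw [pow_succ', mul_comm 3 s, mul_comm 2 s, pow_mul, pow_mul, hq]
  rw [hq] at hT1 hT2
  generalize (2 : ℤ) ^ (s - 1) = h at *
  and_intros <;> intros <;> grind
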